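/- Let λ > 0 and 1 < p < ∞. Suppose F ⊆ L^p((0,∞), x^{2λ}dx) satisfies: (a) sup_{f∈F} ‖f‖_{L^p(dm_λ)} < ∞; (b) for every ε > 0 there exists M > 0 with ∫_M^∞ |f(x)|^p x^{2λ} dx < ε^p for all f ∈ F; (c) for every ε > 0 there exists ρ > 0 with ∫_0^∞ |f(x+y) - f(x)|^p x^{2λ} dx < ε^p for all f ∈ F and 0 < y < ρ. Then F is totally bounded in L^p((0,∞), x^{2λ}dx). -/

import Mathlib

open MeasureTheory Set

noncomputable def besselMeasure (lam : ℝ) : Measure ℝ :=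
  (volume.restrict (Set.Ioi (0:ℝ))).withDensity fun x => ENNReal.ofReal (x ^ (2*lam))

open scoped ENNReal

/-- A bounded subset of a normed space is totally bounded as soon as it lies in arbitrarily small
neighbourhoods of finite-dimensional subspaces. -/
theorem totallyBounded_of_forall_exists_finiteDimensional {E : Type*} [NormedAddCommGroup E]
    [NormedSpace ℝ E] {F : Set E} (hbdd : ∃ C : ℝ, ∀ f ∈ F, ‖f‖ ≤ C)
    (happrox : ∀ ε > (0 : ℝ), ∃ V : Submodule ℝ E, FiniteDimensional ℝ V ∧
      ∀ f ∈ F, ∃ g ∈ V, ‖f - g‖ ≤ ε) :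
    TotallyBounded F := by
  obtain ⟨C, hC⟩ := hbdd
  rw [Metric.totallyBounded_iff]
  intro ε hε
  obtain ⟨V, hV, hFV⟩ := happrox (ε / 2) (by positivity)
  have hK : IsCompact ((↑) '' Metric.closedBall (0 : V) (C + ε / 2) : Set E) :=
    (isCompact_closedBall (0 : V) (C + ε / 2)).image continuous_subtype_val
  obtain ⟨t, ht, hcover⟩ := Metric.totallyBounded_iff.1 hK.totallyBounded (ε / 2) (by positivity)
  refine ⟨t, ht, fun f hf => ?_⟩
  obtain ⟨g, hg, hfg⟩ := hFV f hf
  have hgK : g ∈ ((↑) '' Metric.closedBall (0 : V) (C + ε / 2) : Set E) := by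
    refine ⟨⟨g, hg⟩, ?_, rfl⟩
    rw [mem_closedBall_zero_iff, Submodule.coe_norm]
    calc ‖g‖ ≤ ‖f‖ + ‖f - g‖ := norm_le_norm_add_norm_sub f g
      _ ≤ C + ε / 2 := add_le_add (hC f hf) hfg
  obtain ⟨z, hz, hgz⟩ := mem_iUnion₂.1 (hcover hgK)
  refine mem_iUnion₂.2 ⟨z, hz, ?_⟩
  rw [Metric.mem_ball] at hgz ⊢
  have := dist_triangle f g z
  rw [dist_eq_norm f g] at this
  linarith

theorem besselMeasure_eq_withDensity_indicator (lam : ℝ) :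
    besselMeasure lam =
      volume.withDensity ((Ioi (0 : ℝ)).indicator fun x => ENNReal.ofReal (x ^ (2 * lam))) := by
  rw [besselMeasure, withDensity_indicator measurableSet_Ioi]

instance besselMeasure.instSFinite (lam : ℝ) : SFinite (besselMeasure lam) := by
  unfold besselMeasure
  infer_instance

theorem ae_besselMeasure_pos (lam : ℝ) : ∀ᵐ x ∂besselMeasure lam, 0 < x :=
  (withDensity_absolutelyContinuous _ _).ae_le (ae_restrict_mem measurableSet_Ioi)

/-- Right translations do not increase the Bessel measure, because its density is increasing. -/
theorem map_add_right_besselMeasure_le {lam y : ℝ} (hlam : 0 < lam) (hy : 0 ≤ y) :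
    (besselMeasure lam).map (· + y) ≤ besselMeasure lam := by
  refine Measure.le_iff.2 fun s hs => ?_
  rw [Measure.map_apply (measurable_add_const y) hs, besselMeasure_eq_withDensity_indicator,
    withDensity_apply _ hs, withDensity_apply _ (measurable_add_const y hs),
    ← lintegral_indicator hs, ← lintegral_indicator (measurable_add_const y hs),
    ← lintegral_add_right_eq_self (s.indicator _) y]
  refine lintegral_mono fun x => ?_
  by_cases hx : x + y ∈ s
  · rw [indicator_of_mem (show x ∈ (· + y) ⁻¹' s from hx), indicator_of_mem hx]
    by_cases hx0 : 0 < x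
    · rw [indicator_of_mem (mem_Ioi.2 hx0),
        indicator_of_mem (mem_Ioi.2 (add_pos_of_pos_of_nonneg hx0 hy))]
      exact ENNReal.ofReal_le_ofReal
        (Real.rpow_le_rpow hx0.le (le_add_of_nonneg_right hy) (by positivity))
    · rw [indicator_of_notMem (by simpa using hx0)]
      exact zero_le
  · rw [indicator_of_notMem (show x ∉ (· + y) ⁻¹' s from hx)]
    exact zero_le

theorem besselMeasure_Ico_lt_top {lam : ℝ} (hlam : 0 < lam) (a b : ℝ) :
    besselMeasure lam (Ico a b) < ∞ := by
  rw [besselMeasure_eq_withDensity_indicator, withDensity_apply _ measurableSet_Ico]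
  calc _ ≤ ∫⁻ _ in Ico a b, ENNReal.ofReal (|b| ^ (2 * lam)) := by
        refine setLIntegral_mono measurable_const fun x hx => ?_
        refine indicator_apply_le' (fun hx0 => ?_) fun _ => zero_le
        exact ENNReal.ofReal_le_ofReal (Real.rpow_le_rpow (le_of_lt hx0)
          (hx.2.le.trans (le_abs_self b)) (by positivity))
    _ < ∞ := by
        rw [setLIntegral_const, Real.volume_Ico]
        exact ENNReal.mul_lt_top ENNReal.ofReal_lt_top ENNReal.ofReal_lt_top

theorem MeasureTheory.MemLp.comp_add_right_besselMeasure {lam y : ℝ} {q : ℝ≥0∞} {f : ℝ → ℝ}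
    (hf : MemLp f q (besselMeasure lam)) (hlam : 0 < lam) (hy : 0 ≤ y) :
    MemLp (fun x => f (x + y)) q (besselMeasure lam) :=
  (hf.mono_measure (map_add_right_besselMeasure_le hlam hy)).comp_of_map
    (measurable_add_const y).aemeasurable

/-- For a function in `L^p`, an upper bound on the Bochner integral of `|f| ^ p` is one on the
corresponding Lebesgue integral. -/
theorem MeasureTheory.MemLp.lintegral_enorm_rpow_lt {α : Type*} [MeasurableSpace α]
    {μ : Measure α} {p r : ℝ} (hp : 0 < p) {f : α → ℝ} (hf : MemLp f (ENNReal.ofReal p) μ)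
    (hr : ∫ x, |f x| ^ p ∂μ < r) :
    ∫⁻ x, ‖f x‖ₑ ^ p ∂μ < ENNReal.ofReal r := by
  have hint : Integrable (fun x => |f x| ^ p) μ := by
    simpa [ENNReal.toReal_ofReal hp.le] using
      hf.integrable_norm_rpow (by simpa using hp) ENNReal.ofReal_ne_top
  have heq : ∫⁻ x, ‖f x‖ₑ ^ p ∂μ = ENNReal.ofReal (∫ x, |f x| ^ p ∂μ) := by
    rw [ofReal_integral_eq_lintegral_ofReal hint (ae_of_all _ fun x => by positivity)]
    refine lintegral_congr fun x => ?_
    rw [Real.enorm_eq_ofReal_abs, ENNReal.ofReal_rpow_of_nonneg (abs_nonneg _) hp.le]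
  rw [heq]
  exact (ENNReal.ofReal_lt_ofReal_iff_of_nonneg
    (integral_nonneg fun x => by positivity)).2 hr

/-- If translates of `f` by less than `2 * h` are close to `f`, then for some offset `t`, `f` is
close to the step function whose value at `x` is that of `f` at the point with offset `t` in the
cell of the grid `h ℕ` following the one of `x`. -/
theorem exists_lintegral_sub_gridSample_le {μ : Measure ℝ} [SFinite μ] (hμ : ∀ᵐ x ∂μ, 0 < x)
    {f : ℝ → ℝ} (hf : Measurable f) {h p : ℝ} (hh : 0 < h) {A : ℝ≥0∞} (hA₀ : A ≠ 0) (hA : A ≠ ∞)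
    (hclose : ∀ y, 0 < y → y < 2 * h → ∫⁻ x, ‖f (x + y) - f x‖ₑ ^ p ∂μ ≤ A) :
    ∃ t, ∫⁻ x, ‖f x - f (h * (⌊x / h⌋₊ + 1) + t)‖ₑ ^ p ∂μ ≤ 3 * A := by
  by_contra! hcon
  have hmeas : Measurable fun z : ℝ × ℝ => ‖f (z.1 + z.2) - f z.1‖ₑ ^ p := by fun_prop
  have hfloor : Measurable fun x : ℝ => ⌊x / h⌋₊ := Nat.measurable_floor.comp (by fun_prop)
  have hcast : Measurable fun x : ℝ => (⌊x / h⌋₊ : ℝ) := measurable_from_nat.comp hfloor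
  have hmeas' : Measurable fun z : ℝ × ℝ =>
      ‖f z.2 - f (h * (⌊z.2 / h⌋₊ + 1) + z.1)‖ₑ ^ p := by
    have : Measurable fun z : ℝ × ℝ => (⌊z.2 / h⌋₊ : ℝ) := hcast.comp measurable_snd
    fun_prop
  have hinner : ∀ x, 0 < x →
      ∫⁻ t in Ioo 0 h, ‖f x - f (h * (⌊x / h⌋₊ + 1) + t)‖ₑ ^ p ≤
        ∫⁻ y in Ioo 0 (2 * h), ‖f (x + y) - f x‖ₑ ^ p := by
    intro x hx
    set s := h * (⌊x / h⌋₊ + 1) - x with hs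
    have hs0 : 0 < s := by
      have := (div_lt_iff₀ hh).1 (Nat.lt_floor_add_one (x / h))
      linarith
    have hsh : s ≤ h := by
      have := (le_div_iff₀ hh).1 (Nat.floor_le (div_nonneg hx.le hh.le))
      linarith
    rw [← lintegral_indicator measurableSet_Ioo, ← lintegral_indicator measurableSet_Ioo,
      ← lintegral_add_left_eq_self
        ((Ioo 0 (2 * h)).indicator fun y => ‖f (x + y) - f x‖ₑ ^ p) s]
    refine lintegral_mono fun t => indicator_apply_le' (fun ht => ?_) fun _ => zero_le
    rw [indicator_of_mem (show s + t ∈ Ioo 0 (2 * h) from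
      ⟨by linarith [ht.1], by linarith [ht.2]⟩), enorm_sub_rev,
      show x + (s + t) = h * (⌊x / h⌋₊ + 1) + t by rw [hs]; ring]
  have hupper : ∫⁻ t in Ioo 0 h, ∫⁻ x, ‖f x - f (h * (⌊x / h⌋₊ + 1) + t)‖ₑ ^ p ∂μ ≤
      A * ENNReal.ofReal (2 * h) := by
    calc ∫⁻ t in Ioo 0 h, ∫⁻ x, ‖f x - f (h * (⌊x / h⌋₊ + 1) + t)‖ₑ ^ p ∂μ
        = ∫⁻ x, (∫⁻ t in Ioo 0 h, ‖f x - f (h * (⌊x / h⌋₊ + 1) + t)‖ₑ ^ p) ∂μ :=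
          lintegral_lintegral_swap hmeas'.aemeasurable
      _ ≤ ∫⁻ x, (∫⁻ y in Ioo 0 (2 * h), ‖f (x + y) - f x‖ₑ ^ p) ∂μ :=
          lintegral_mono_ae (hμ.mono hinner)
      _ = ∫⁻ y in Ioo 0 (2 * h), ∫⁻ x, ‖f (x + y) - f x‖ₑ ^ p ∂μ :=
          lintegral_lintegral_swap hmeas.aemeasurable
      _ ≤ ∫⁻ _ in Ioo 0 (2 * h), A :=
          setLIntegral_mono measurable_const fun y hy => hclose y hy.1 hy.2
      _ = A * ENNReal.ofReal (2 * h) := by rw [setLIntegral_const, Real.volume_Ioo, sub_zero]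
  have hlower : 3 * A * ENNReal.ofReal h ≤
      ∫⁻ t in Ioo 0 h, ∫⁻ x, ‖f x - f (h * (⌊x / h⌋₊ + 1) + t)‖ₑ ^ p ∂μ := by
    calc 3 * A * ENNReal.ofReal h = ∫⁻ _ in Ioo 0 h, 3 * A := by
          rw [setLIntegral_const, Real.volume_Ioo, sub_zero]
      _ ≤ _ := lintegral_mono fun t => (hcon t).le
  have hle := hlower.trans hupper
  lift A to NNReal using hA
  have hA₀' : 0 < (A : ℝ) := by
    have : A ≠ 0 := by simpa using hA₀
    positivity
  have hreal := ENNReal.toReal_mono (by finiteness) hle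
  simp only [ENNReal.toReal_mul, ENNReal.toReal_ofNat, ENNReal.coe_toReal,
    ENNReal.toReal_ofReal hh.le, ENNReal.toReal_ofReal (by positivity : 0 ≤ 2 * h)] at hreal
  nlinarith [mul_pos hA₀' hh]

/-- A step function on the grid `h ℕ` with `N` cells, evaluated at a positive point. -/
theorem sum_indicator_grid_eq {h x : ℝ} (hh : 0 < h) (hx : 0 < x) (N : ℕ) (c : ℕ → ℝ) :
    ∑ k : Fin N, c k * (Ico (h * (k : ℕ)) (h * ((k : ℕ) + 1))).indicator (fun _ => (1 : ℝ)) x =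
      if x < h * N then c ⌊x / h⌋₊ else 0 := by
  have hmem : ∀ k : ℕ, x ∈ Ico (h * k) (h * (k + 1)) ↔ ⌊x / h⌋₊ = k := by
    intro k
    rw [Nat.floor_eq_iff (by positivity), le_div_iff₀ hh, div_lt_iff₀ hh, mem_Ico,
      mul_comm h, mul_comm h]
  have hlt : x < h * N ↔ ⌊x / h⌋₊ < N := by
    rw [Nat.floor_lt (by positivity), div_lt_iff₀ hh, mul_comm]
  simp only [indicator_apply, hmem, mul_ite, mul_one, mul_zero]
  rw [Fin.sum_univ_eq_sum_range (fun k => if ⌊x / h⌋₊ = k then c k else 0) N]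
  simp [hlt]

theorem MeasureTheory.Lp.enorm_rpow_eq_lintegral {α : Type*} [MeasurableSpace α] {μ : Measure α}
    {p : ℝ} (hp : 0 < p) (f : Lp ℝ (ENNReal.ofReal p) μ) :
    ‖f‖ₑ ^ p = ∫⁻ x, ‖f x‖ₑ ^ p ∂μ := by
  rw [Lp.enorm_def, eLpNorm_eq_lintegral_rpow_enorm_toReal (by simpa using hp)
    ENNReal.ofReal_ne_top, ENNReal.toReal_ofReal hp.le, ← ENNReal.rpow_mul,
    one_div_mul_cancel hp.ne', ENNReal.rpow_one]

theorem totallyBounded_sufficient (lam p : ℝ) (hlam : 0 < lam) (hp : 1 < p)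
    [Fact ((1 : ENNReal) ≤ ENNReal.ofReal p)]
    (F : Set (Lp ℝ (ENNReal.ofReal p) (besselMeasure lam)))
    (hbdd : ∃ C : ℝ, ∀ f ∈ F, ‖f‖ ≤ C)
    (hvanish : ∀ ε > (0:ℝ), ∃ M > (0:ℝ), ∀ f ∈ F,
      (∫ x in Set.Ioi M, |(f : ℝ → ℝ) x| ^ p ∂(besselMeasure lam)) < ε ^ p)
    (hequi : ∀ ε > (0:ℝ), ∃ ρ > (0:ℝ), ∀ f ∈ F, ∀ y : ℝ, 0 < y → y < ρ →
      (∫ x, |(f : ℝ → ℝ) (x + y) - (f : ℝ → ℝ) x| ^ p ∂(besselMeasure lam)) < ε ^ p) :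
    TotallyBounded F := by
  have hp0 : 0 < p := by linarith
  refine totallyBounded_of_forall_exists_finiteDimensional hbdd fun η hη => ?_
  set ε := η / 4 with hε_def
  have hε : 0 < ε := by positivity
  obtain ⟨M, hM, htail⟩ := hvanish ε hε
  obtain ⟨ρ, hρ, hshift⟩ := hequi ε hε
  set h := ρ / 2 with hh_def
  have hh : 0 < h := by positivity
  obtain ⟨N, hN⟩ := exists_nat_gt (M / h)
  have hMN : M < h * N := by rwa [div_lt_iff₀' hh] at hN
  let e : Fin N → Lp ℝ (ENNReal.ofReal p) (besselMeasure lam) := fun k =>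
    indicatorConstLp _ (measurableSet_Ico (a := h * (k : ℕ)) (b := h * ((k : ℕ) + 1)))
      (besselMeasure_Ico_lt_top hlam _ _).ne (1 : ℝ)
  refine ⟨Submodule.span ℝ (range e), FiniteDimensional.span_of_finite ℝ (finite_range e),
    fun f hf => ?_⟩
  have hfL := Lp.memLp f
  obtain ⟨t, ht⟩ := exists_lintegral_sub_gridSample_le (p := p) (A := ENNReal.ofReal (ε ^ p))
    (ae_besselMeasure_pos lam) (Lp.stronglyMeasurable f).measurable hh
    (by simpa using Real.rpow_pos_of_pos hε p) ENNReal.ofReal_ne_top fun y hy hyh =>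
      (((hfL.comp_add_right_besselMeasure hlam hy.le).sub hfL).lintegral_enorm_rpow_lt hp0
        (hshift f hf y hy (by linarith))).le
  have hft := ((hfL.restrict (Ioi M)).lintegral_enorm_rpow_lt hp0 (htail f hf)).le
  let c : ℕ → ℝ := fun k => f (h * (k + 1) + t)
  refine ⟨∑ k : Fin N, c k • e k, Submodule.sum_mem _ fun k _ =>
    Submodule.smul_mem _ _ (Submodule.subset_span (mem_range_self k)), ?_⟩
  have hval : ∀ᵐ x ∂besselMeasure lam, (f - ∑ k : Fin N, c k • e k : Lp ℝ _ _) x =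
      f x - if x < h * N then c ⌊x / h⌋₊ else 0 := by
    have hsmul : ∀ᵐ x ∂besselMeasure lam, ∀ k : Fin N, (c k • e k : Lp ℝ _ _) x =
        c k * (Ico (h * (k : ℕ)) (h * ((k : ℕ) + 1))).indicator (fun _ => (1 : ℝ)) x := by
      refine ae_all_iff.2 fun k => ?_
      filter_upwards [Lp.coeFn_smul (c k) (e k), indicatorConstLp_coeFn
        (p := ENNReal.ofReal p) (hs := measurableSet_Ico)
        (hμs := (besselMeasure_Ico_lt_top hlam (h * (k : ℕ)) (h * ((k : ℕ) + 1))).ne)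
        (c := (1 : ℝ))] with x h₁ h₂
      rw [h₁, Pi.smul_apply, smul_eq_mul, h₂]
    filter_upwards [ae_besselMeasure_pos lam, Lp.coeFn_sub f (∑ k : Fin N, c k • e k),
      Lp.coeFn_finsetSum Finset.univ (fun k : Fin N => c k • e k), hsmul] with x hx h₁ h₂ h₃
    rw [h₁, Pi.sub_apply, h₂, Finset.sum_apply, Finset.sum_congr rfl fun k _ => h₃ k,
      sum_indicator_grid_eq hh hx]
  have hpow : ‖f - ∑ k : Fin N, c k • e k‖ₑ ^ p ≤ ENNReal.ofReal η ^ p := by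
    calc ‖f - ∑ k : Fin N, c k • e k‖ₑ ^ p
        ≤ ∫⁻ x, (‖f x - f (h * (⌊x / h⌋₊ + 1) + t)‖ₑ ^ p +
            (Ioi M).indicator (fun x => ‖f x‖ₑ ^ p) x) ∂besselMeasure lam := by
          rw [Lp.enorm_rpow_eq_lintegral hp0]
          refine lintegral_mono_ae (hval.mono fun x hx => ?_)
          rw [hx]
          split_ifs with hxN
          · exact le_self_add
          · rw [indicator_of_mem (show x ∈ Ioi M from hMN.trans_le (not_lt.1 hxN)), sub_zero]
            exact le_add_self
      _ ≤ 3 * ENNReal.ofReal (ε ^ p) + ENNReal.ofReal (ε ^ p) := by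
          rw [lintegral_add_right _ (Measurable.indicator
            ((Lp.stronglyMeasurable f).measurable.enorm.pow_const p) measurableSet_Ioi),
            lintegral_indicator measurableSet_Ioi]
          exact add_le_add ht hft
      _ = ENNReal.ofReal (4 * ε ^ p) := by
          rw [ENNReal.ofReal_mul (by norm_num), ENNReal.ofReal_ofNat]
          ring
      _ ≤ ENNReal.ofReal ((4 * ε) ^ p) := by
          refine ENNReal.ofReal_le_ofReal ?_
          rw [Real.mul_rpow (by norm_num) hε.le]
          gcongr
          exact Real.self_le_rpow_of_one_le (by norm_num) hp.le
      _ = ENNReal.ofReal η ^ p := by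
          rw [ENNReal.ofReal_rpow_of_nonneg hη.le hp0.le, hε_def, mul_div_cancel₀ η (by norm_num)]
  rw [ENNReal.rpow_le_rpow_iff hp0, ← ofReal_norm] at hpow
  exact (ENNReal.ofReal_le_ofReal_iff hη.le).1 hpow
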